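/- Let G be a finite connected simple graph and T a set of vertices of G of even cardinality. Then the minimum cardinality of an edge set J whose set of odd-degree vertices equals T is equal to the minimum, over all perfect pairings M of the vertices of T (partitions of T into unordered pairs), of the sum over pairs (u, v) ∈ M of the shortest-path distance d(u, v) in G. In particular, connecting each pair of matched vertices of a distance-minimizing pairing by shortest paths yields a smallest odd-vertex pairing. -/

import Mathlib

/-- The set of vertices having odd degree in the spanning subgraph with edge set
`J` (a vertex has odd degree iff it is incident to an odd number of edges of `J`). -/
def oddVertexSet {V : Type*} (J : Set (Sym2 V)) : Set V :=
  {v | Odd ({e ∈ J | v ∈ e}).ncard}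

/-! A walk from `u` to `v` has odd-degree set `{u} ∆ {v}`, and odd-degree sets are additive for
symmetric differences, so joining matched pairs by shortest walks turns a pairing of `T` into an
edge set at most as large as its cost. Conversely, build an edge set one edge at a time: adding
`s(u, v)` changes the odd-degree set by `{u} ∆ {v}`, and by the triangle inequality a pairing can be
rerouted to follow this change at the expense of at most `d u v`, which is `1` on an edge. -/

open scoped symmDiff

theorem symmDiff_symmDiff_symmDiff_cancel {α : Type*} [GeneralizedBooleanAlgebra α] (a b c : α) :
    (a ∆ b) ∆ (b ∆ c) = a ∆ c := by
  rw [symmDiff_assoc, symmDiff_symmDiff_cancel_left]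

theorem sdiff_pair_symmDiff_pair {α : Type*} [DecidableEq α] {T : Finset α} {u v : α}
    (hu : u ∈ T) (hv : v ∈ T) (huv : u ≠ v) : (T \ {u, v}) ∆ ({u} ∆ {v}) = T := by
  ext w
  simp only [Finset.mem_symmDiff, Finset.mem_sdiff, Finset.mem_insert, Finset.mem_singleton]
  grind

theorem odd_ncard_symmDiff_iff {α : Type*} {s t : Set α} (hs : s.Finite) (ht : t.Finite) :
    Odd (s ∆ t).ncard ↔ Xor (Odd s.ncard) (Odd t.ncard) := by
  have hst : (s ∆ t).ncard = (s \ t).ncard + (t \ s).ncard :=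
    Set.ncard_union_eq disjoint_sdiff_sdiff hs.sdiff ht.sdiff
  have h_left := Set.ncard_inter_add_ncard_sdiff_eq_ncard s t hs
  have h_right := Set.ncard_inter_add_ncard_sdiff_eq_ncard t s ht
  rw [Set.inter_comm] at h_right
  grind

theorem ncard_symmDiff_le {α : Type*} {s t : Set α} (hs : s.Finite) (ht : t.Finite) :
    (s ∆ t).ncard ≤ s.ncard + t.ncard :=
  (Set.ncard_le_ncard Set.symmDiff_subset_union (hs.union ht)).trans (Set.ncard_union_le s t)

section Pairing

variable {V : Type*}

/-- A perfect pairing of `T`, encoded as a function restricting to a fixed-point-free involution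
of `T`; its values outside `T` are irrelevant. -/
def IsPairing (T : Finset V) (f : V → V) : Prop :=
  ∀ v ∈ T, f v ∈ T ∧ f v ≠ v ∧ f (f v) = v

/-- The costs, with respect to a symmetric weight `d`, of the perfect pairings of `T`. The sum over
`T` counts every matched pair twice, whence the factor `2`. -/
def pairingCosts (d : V → V → ℕ) (T : Finset V) : Set ℕ :=
  {n | ∃ f : V → V, IsPairing T f ∧ 2 * n = ∑ v ∈ T, d v (f v)}

theorem zero_mem_pairingCosts_empty (d : V → V → ℕ) : 0 ∈ pairingCosts d ∅ :=
  ⟨id, by simp [IsPairing], by simp⟩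

variable {d : V → V → ℕ} {T : Finset V} {u v : V} {n : ℕ}

theorem sum_eq_sum_sdiff_pair_add [DecidableEq V] {M : Type*} [AddCommMonoid M] (g : V → M)
    (hu : u ∈ T) (hv : v ∈ T) (huv : u ≠ v) :
    ∑ w ∈ T, g w = ∑ w ∈ T \ {u, v}, g w + (g u + g v) := by
  rw [← Finset.sum_sdiff (Finset.insert_subset hu (Finset.singleton_subset_iff.2 hv)),
    Finset.sum_pair huv]

theorem add_mem_pairingCosts [DecidableEq V] (hd : ∀ u v, d u v = d v u)
    (hn : n ∈ pairingCosts d (T \ {u, v})) (hu : u ∈ T) (hv : v ∈ T) (huv : u ≠ v) :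
    n + d u v ∈ pairingCosts d T := by
  obtain ⟨f, hf, hsum⟩ := hn
  let g : V → V := fun w ↦ if w = u then v else if w = v then u else f w
  have hgu : g u = v := if_pos rfl
  have hgv : g v = u := by simp [g, huv.symm]
  have hgf : ∀ w ∈ T \ {u, v}, g w = f w := by grind
  refine ⟨g, ?_, ?_⟩
  · unfold IsPairing at hf ⊢
    grind
  · have hsum_g : ∑ w ∈ T \ {u, v}, d w (g w) = ∑ w ∈ T \ {u, v}, d w (f w) :=
      Finset.sum_congr rfl fun w hw ↦ by rw [hgf w hw]
    rw [sum_eq_sum_sdiff_pair_add _ hu hv huv, hsum_g, ← hsum, hgu, hgv, hd v u]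
    ring

theorem exists_mem_pairingCosts_sdiff_pair [DecidableEq V] (hd : ∀ u v, d u v = d v u)
    (hn : n ∈ pairingCosts d T) (hu : u ∈ T) :
    ∃ a ∈ T, u ≠ a ∧ ∃ m ∈ pairingCosts d (T \ {u, a}), m + d u a = n := by
  obtain ⟨f, hf, hsum⟩ := hn
  obtain ⟨hfu, hne, hffu⟩ := hf u hu
  have hf' : IsPairing (T \ {u, f u}) f := by
    unfold IsPairing at hf ⊢
    grind
  rw [sum_eq_sum_sdiff_pair_add _ hu hfu hne.symm, hffu, hd (f u) u] at hsum
  exact ⟨f u, hfu, hne.symm, n - d u (f u), ⟨f, hf', by omega⟩, by omega⟩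

theorem pairingCosts_nonempty_of_even (hd : ∀ u v, d u v = d v u) (hT : Even T.card) :
    (pairingCosts d T).Nonempty := by
  classical
  induction T using Finset.strongInduction with
  | H T ih =>
    obtain rfl | hne := T.eq_empty_or_nonempty
    · exact ⟨0, zero_mem_pairingCosts_empty d⟩
    have hcard : 1 < T.card := by
      have := hne.card_pos
      grind
    obtain ⟨u, hu, v, hv, huv⟩ := Finset.one_lt_card.1 hcard
    have hsub : {u, v} ⊆ T := Finset.insert_subset hu (Finset.singleton_subset_iff.2 hv)
    have heven : Even (T \ {u, v}).card := by
      rw [Finset.card_sdiff_of_subset hsub, Finset.card_pair huv]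
      grind
    obtain ⟨n, hn⟩ := ih _ (Finset.sdiff_ssubset hsub (Finset.insert_nonempty u _)) heven
    exact ⟨_, add_mem_pairingCosts hd hn hu hv huv⟩

/- If `u ∈ T` is matched with `a`, then `T ∆ ({u} ∆ {v}) = (T \ {u, a}) ∆ ({a} ∆ {v})` and
`d a v ≤ d u a + d u v`, so the claim for `T` and `u, v` follows from that for the smaller set
`T \ {u, a}` and `a, v`. -/
theorem exists_mem_pairingCosts_symmDiff_le [DecidableEq V] (hd : ∀ u v, d u v = d v u)
    (htri : ∀ u v w, d u w ≤ d u v + d v w) (hn : n ∈ pairingCosts d T) (u v : V) :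
    ∃ m ∈ pairingCosts d (T ∆ ({u} ∆ {v})), m ≤ n + d u v := by
  induction T using Finset.strongInduction generalizing n u v with
  | H T ih =>
    have reroute : ∀ x y, x ∈ T → ∃ m ∈ pairingCosts d (T ∆ ({x} ∆ {y})), m ≤ n + d x y := by
      intro x y hx
      obtain ⟨a, ha, hxa, k, hk, rfl⟩ := exists_mem_pairingCosts_sdiff_pair hd hn hx
      obtain ⟨m, hm, hmk⟩ := ih (T \ {x, a}) (by grind) hk a y
      have hT : T ∆ ({x} ∆ {y}) = (T \ {x, a}) ∆ ({a} ∆ {y}) := by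
        nth_rw 1 [← sdiff_pair_symmDiff_pair hx ha hxa]
        rw [symmDiff_assoc, symmDiff_comm ({x} : Finset V) {a}, symmDiff_symmDiff_symmDiff_cancel]
      refine ⟨m, hT ▸ hm, ?_⟩
      have := htri a x y
      rw [hd a x] at this
      omega
    by_cases hu : u ∈ T
    · exact reroute u v hu
    by_cases hv : v ∈ T
    · rw [symmDiff_comm ({u} : Finset V), hd]
      exact reroute v u hv
    obtain rfl | huv := eq_or_ne u v
    · exact ⟨n, by rwa [symmDiff_self, symmDiff_bot], Nat.le_add_right _ _⟩
    have hT : T ∆ ({u} ∆ {v}) \ {u, v} = T := by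
      ext w
      simp only [Finset.mem_symmDiff, Finset.mem_sdiff, Finset.mem_insert, Finset.mem_singleton]
      grind
    refine ⟨n + d u v, add_mem_pairingCosts hd (by rwa [hT]) ?_ ?_ huv, le_rfl⟩ <;>
      simp [Finset.mem_symmDiff, hu, hv, huv, huv.symm]

end Pairing

section OddVertexPairing

variable {V : Type*}

@[simp]
theorem oddVertexSet_empty : oddVertexSet (∅ : Set (Sym2 V)) = ∅ := by
  simp [oddVertexSet]

theorem oddVertexSet_singleton {u v : V} (huv : u ≠ v) : oddVertexSet {s(u, v)} = {u} ∆ {v} := by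
  ext w
  by_cases hw : w ∈ s(u, v)
  · have : {e ∈ ({s(u, v)} : Set (Sym2 V)) | w ∈ e} = {s(u, v)} := by grind
    simp only [oddVertexSet, Set.mem_ofPred_eq, this, Set.ncard_singleton, odd_one, true_iff]
    grind
  · have : {e ∈ ({s(u, v)} : Set (Sym2 V)) | w ∈ e} = ∅ := by grind
    simp only [oddVertexSet, Set.mem_ofPred_eq, this, Set.ncard_empty]
    grind

theorem oddVertexSet_symmDiff {J K : Set (Sym2 V)} (hJ : J.Finite) (hK : K.Finite) :
    oddVertexSet (J ∆ K) = oddVertexSet J ∆ oddVertexSet K := by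
  ext v
  have hsep : {e ∈ J ∆ K | v ∈ e} = {e ∈ J | v ∈ e} ∆ {e ∈ K | v ∈ e} :=
    Set.inter_symmDiff_distrib_right J K {e | v ∈ e}
  rw [oddVertexSet, Set.mem_ofPred_eq, hsep]
  exact odd_ncard_symmDiff_iff (hJ.sep _) (hK.sep _)

/-- `J` is a finite set of edges of `G` whose set of odd-degree vertices is `T` (a `T`-join).
Finiteness is required because `Set.ncard` is `0` on infinite sets. -/
structure IsOddVertexPairing (G : SimpleGraph V) (J : Set (Sym2 V)) (T : Set V) : Prop where
  finite : J.Finite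
  subset_edgeSet : J ⊆ G.edgeSet
  oddVertexSet_eq : oddVertexSet J = T

theorem isOddVertexPairing_iff_of_finite [Finite V] {G : SimpleGraph V} {J : Set (Sym2 V)}
    {T : Set V} : IsOddVertexPairing G J T ↔ J ⊆ G.edgeSet ∧ oddVertexSet J = T :=
  ⟨fun h ↦ ⟨h.subset_edgeSet, h.oddVertexSet_eq⟩, fun h ↦ ⟨J.toFinite, h.1, h.2⟩⟩

namespace IsOddVertexPairing

variable {G : SimpleGraph V} {J K : Set (Sym2 V)} {S T : Set V}

theorem empty : IsOddVertexPairing G ∅ ∅ :=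
  ⟨Set.finite_empty, Set.empty_subset _, oddVertexSet_empty⟩

theorem singleton {u v : V} (huv : G.Adj u v) : IsOddVertexPairing G {s(u, v)} ({u} ∆ {v}) :=
  ⟨Set.finite_singleton _, Set.singleton_subset_iff.2 huv, oddVertexSet_singleton huv.ne⟩

theorem symmDiff (hJ : IsOddVertexPairing G J S) (hK : IsOddVertexPairing G K T) :
    IsOddVertexPairing G (J ∆ K) (S ∆ T) where
  finite := hJ.finite.symmDiff hK.finite
  subset_edgeSet :=
    Set.symmDiff_subset_union.trans (Set.union_subset hJ.subset_edgeSet hK.subset_edgeSet)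
  oddVertexSet_eq := by
    rw [oddVertexSet_symmDiff hJ.finite hK.finite, hJ.oddVertexSet_eq, hK.oddVertexSet_eq]

theorem exists_ncard_le_length {u v : V} (p : G.Walk u v) :
    ∃ J, IsOddVertexPairing G J ({u} ∆ {v}) ∧ J.ncard ≤ p.length := by
  induction p with
  | nil => exact ⟨∅, by simpa using empty, by simp⟩
  | @cons a b c hab p ih =>
    obtain ⟨J, hJ, hcard⟩ := ih
    have hJ' := (singleton hab).symmDiff hJ
    rw [symmDiff_symmDiff_symmDiff_cancel] at hJ'
    refine ⟨_, hJ', ?_⟩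
    have := ncard_symmDiff_le (Set.finite_singleton s(a, b)) hJ.finite
    rw [Set.ncard_singleton] at this
    rw [SimpleGraph.Walk.length_cons]
    omega

theorem exists_ncard_le_of_mem_pairingCosts (hG : G.Connected) {T : Finset V} {n : ℕ}
    (hn : n ∈ pairingCosts G.dist T) : ∃ J, IsOddVertexPairing G J T ∧ J.ncard ≤ n := by
  classical
  induction T using Finset.strongInduction generalizing n with
  | H T ih =>
    obtain rfl | ⟨u, hu⟩ := T.eq_empty_or_nonempty
    · exact ⟨∅, by simpa using empty, by simp⟩
    obtain ⟨a, ha, hua, m, hm, rfl⟩ :=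
      exists_mem_pairingCosts_sdiff_pair (fun _ _ ↦ G.dist_comm) hn hu
    obtain ⟨J, hJ, hJm⟩ := ih (T \ {u, a}) (by grind) hm
    obtain ⟨p, hp⟩ := hG.exists_walk_length_eq_dist u a
    obtain ⟨K, hK, hKp⟩ := exists_ncard_le_length p
    refine ⟨J ∆ K, ?_, ?_⟩
    · rw [← sdiff_pair_symmDiff_pair hu ha hua, Finset.coe_symmDiff, Finset.coe_symmDiff,
        Finset.coe_singleton, Finset.coe_singleton]
      exact hJ.symmDiff hK
    · rw [← hp]
      exact (ncard_symmDiff_le hJ.finite hK.finite).trans (add_le_add hJm hKp)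

theorem exists_mem_pairingCosts_le_ncard (hG : G.Connected) {T : Finset V}
    (hJ : IsOddVertexPairing G J T) : ∃ n ∈ pairingCosts G.dist T, n ≤ J.ncard := by
  classical
  obtain ⟨hfin, hsub, hT⟩ := hJ
  induction J, hfin using Set.Finite.induction_on generalizing T with
  | empty =>
    obtain rfl : T = ∅ := by simpa using hT.symm
    exact ⟨0, zero_mem_pairingCosts_empty _, Nat.zero_le _⟩
  | @insert e J he hfin ih =>
    obtain ⟨heG, hJG⟩ := Set.insert_subset_iff.1 hsub
    induction e with | _ u v
    have huv : G.Adj u v := heG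
    have hinsert : insert s(u, v) J = J ∆ {s(u, v)} :=
      ((Set.disjoint_singleton_right.2 he).symmDiff_eq_sup.trans Set.union_singleton).symm
    have hJT : oddVertexSet J = ↑(T ∆ ({u} ∆ {v})) := by
      push_cast
      rw [← hT, hinsert, oddVertexSet_symmDiff hfin (Set.finite_singleton _),
        oddVertexSet_singleton huv.ne, symmDiff_symmDiff_cancel_right]
    obtain ⟨m, hm, hmJ⟩ := ih hJG hJT
    obtain ⟨n, hn, hnm⟩ := exists_mem_pairingCosts_symmDiff_le
      (d := G.dist) (fun _ _ ↦ G.dist_comm) (fun _ _ _ ↦ hG.dist_triangle) hm u v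
    rw [symmDiff_symmDiff_cancel_right] at hn
    rw [SimpleGraph.dist_eq_one_iff_adj.2 huv] at hnm
    refine ⟨n, hn, ?_⟩
    rw [Set.ncard_insert_of_notMem he hfin]
    omega

end IsOddVertexPairing

end OddVertexPairing

theorem minimum_oddVertexPairing_eq_min_pairing_dist_general {V : Type*} (G : SimpleGraph V)
    (hG : G.Connected) (T : Finset V) (hT : Even T.card) :
    ∃ n, IsLeast {n | ∃ J, IsOddVertexPairing G J T ∧ J.ncard = n} n ∧
      IsLeast (pairingCosts G.dist T) n := by
  have hmin : IsLeast (pairingCosts G.dist T) (sInf (pairingCosts G.dist T)) :=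
    isLeast_csInf (pairingCosts_nonempty_of_even (fun _ _ ↦ G.dist_comm) hT)
  have hlower : ∀ J, IsOddVertexPairing G J T → sInf (pairingCosts G.dist T) ≤ J.ncard := by
    intro J hJ
    obtain ⟨m, hm, hmJ⟩ := hJ.exists_mem_pairingCosts_le_ncard hG
    exact (hmin.2 hm).trans hmJ
  obtain ⟨J, hJ, hJn⟩ := IsOddVertexPairing.exists_ncard_le_of_mem_pairingCosts hG hmin.1
  refine ⟨_, ⟨⟨J, hJ, hJn.antisymm (hlower J hJ)⟩, ?_⟩, hmin⟩
  rintro _ ⟨K, hK, rfl⟩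
  exact hlower K hK

/-- In a finite connected simple graph, the minimum cardinality of an edge set
whose odd-degree vertex set equals `T` (with `|T|` even) equals the minimum, over
all perfect pairings of `T` (encoded as fixed-point-free involutions of `T`), of
the sum of shortest-path distances of the matched pairs. -/
theorem minimum_oddVertexPairing_eq_min_pairing_dist {V : Type*} [Fintype V]
    (G : SimpleGraph V) (hG : G.Connected) (T : Finset V) (hT : Even T.card) :
    sInf {n : ℕ | ∃ J : Set (Sym2 V),
        J ⊆ G.edgeSet ∧ oddVertexSet J = ↑T ∧ J.ncard = n} =
    sInf {n : ℕ | ∃ f : V → V,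
        (∀ v ∈ T, f v ∈ T ∧ f v ≠ v ∧ f (f v) = v) ∧
        2 * n = ∑ v ∈ T, G.dist v (f v)} := by
  obtain ⟨n, hJ, hf⟩ := minimum_oddVertexPairing_eq_min_pairing_dist_general G hG T hT
  simp only [isOddVertexPairing_iff_of_finite, and_assoc] at hJ
  exact hJ.csInf_eq.trans hf.csInf_eq.symm
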